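/- Let g satisfy Assumption A and condition (M), let Ω ⊆ ℝ² be open and simply connected, and let u ∈ C²(Ω) with ∇u(x,y) ≠ 0 for all (x,y) ∈ Ω. If u solves div( (g'(|∇u|)/|∇u|) ∇u ) = 0 on Ω, then there exist functions a, b, c ∈ C²(Ω) such that on Ω: ∇a = ( Ξ(|∇u|) u_x u_y , Ξ(|∇u|)(1+u_y²) + ϑ(|∇u|) ), ∇b = ( −[Ξ(|∇u|)(1+u_x²) + ϑ(|∇u|)] , −Ξ(|∇u|) u_x u_y ), and ∇c = ( −Ξ(|∇u|) u_y , Ξ(|∇u|) u_x ). (These conditions express −dX* = N̂ ∧ dX for X* = (a,b,c), where X(x,y) = (x,y,u(x,y)) and N̂ is the asymptotic normal with components N̂₁ = −Ξ(|∇u|)u_x, N̂₂ = −Ξ(|∇u|)u_y, N̂₃ = Ξ(|∇u|) + ϑ(|∇u|).) -/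

import Mathlib

open Real Filter Set

/-- Partial derivative in the `x`-direction. -/
noncomputable def pdx (f : ℝ × ℝ → ℝ) (p : ℝ × ℝ) : ℝ := fderiv ℝ f p (1, 0)

/-- Partial derivative in the `y`-direction. -/
noncomputable def pdy (f : ℝ × ℝ → ℝ) (p : ℝ × ℝ) : ℝ := fderiv ℝ f p (0, 1)

/-- `|∇u|`, the Euclidean norm of the gradient. -/
noncomputable def gnorm (u : ℝ × ℝ → ℝ) (p : ℝ × ℝ) : ℝ :=
  Real.sqrt ((pdx u p) ^ 2 + (pdy u p) ^ 2)

/-- `Ξ(t) = g'(t)/t`. -/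
noncomputable def Xi (g : ℝ → ℝ) (t : ℝ) : ℝ := deriv g t / t

/-- `ϑ(t) = g(t) - t g'(t) - Ξ(t)`. -/
noncomputable def theta (g : ℝ → ℝ) (t : ℝ) : ℝ := g t - t * deriv g t - Xi g t

/-- Assumption A: `g` is `C²` on `[0,∞)`, `g'(0) = 0`, `g'' > 0` on `(0,∞)`,
and `g` has linear growth. -/
def AssumptionA (g : ℝ → ℝ) : Prop :=
  ContDiffOn ℝ 2 g (Set.Ici 0) ∧
  derivWithin g (Set.Ici 0) 0 = 0 ∧
  (∀ t : ℝ, 0 < t → 0 < deriv (deriv g) t) ∧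
  ∃ a A b B : ℝ, 0 < a ∧ 0 < A ∧ 0 ≤ b ∧ 0 ≤ B ∧
    ∀ t : ℝ, 0 ≤ t → a * t - b ≤ g t ∧ g t ≤ A * t + B

/-- Condition (M): `g(t) - t g'(t) → 0` as `t → ∞`. -/
def CondM (g : ℝ → ℝ) : Prop :=
  Filter.Tendsto (fun t => g t - t * deriv g t) Filter.atTop (nhds 0)

/-!
On the open set `Ω` each of the three `1`-forms is closed. For `c` this is the equation itself. For
`a` and `b` it is Noether's theorem for translations in `Ω`: the equation is the Euler-Lagrange
equation of the density `G = g(|∇u|)`, and since `g(t) - t g'(t) = Ξ(t) + ϑ(t)` the prescribed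
gradients are, up to sign and a quarter turn, the rows of the stress tensor `G δᵢⱼ - Ξ uᵢ uⱼ`. These
rows are divergence free because `dG = Ξ (u_x du_x + u_y du_y)`.

A closed form has local primitives, any two of which differ by a locally constant function. They
therefore glue to a section of a covering of `Ω`, and a covering of a simply connected space has
global sections.
-/

open Topology

section LocallyConstantGluing

variable {ι X G : Type*} [TopologicalSpace X]

theorem exists_continuous_section_of_isCoveringMap {Y : Type*} [TopologicalSpace Y] [Nonempty Y]
    [SimplyConnectedSpace X] [LocallyPathConnectedSpace X] {p : Y → X} (hp : IsCoveringMap p) :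
    ∃ s : C(X, Y), ∀ x, p (s x) = x := by
  obtain ⟨y⟩ := ‹Nonempty Y›
  obtain ⟨s, ⟨-, hs⟩, -⟩ := hp.existsUnique_continuousMap_lifts (.id X) (p y) y rfl
  exact ⟨s, congrFun hs⟩

theorem eventually_localTriv_snd_eq_of_discreteTopology [TopologicalSpace G] [DiscreteTopology G]
    (Z : FiberBundleCore ι X G) {s : X → Z.TotalSpace} {x : X} (hs : ContinuousAt s x) {i : ι}
    (hx : (s x).proj ∈ Z.baseSet i) :
    ∀ᶠ y in 𝓝 x, (Z.localTriv i (s y)).2 = (Z.localTriv i (s x)).2 := by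
  have htriv : ContinuousAt (Z.localTriv i) (s x) :=
    (Z.localTriv i).continuousAt ((Z.mem_localTriv_source i (s x)).2 hx)
  have hcoord : ContinuousAt (fun y ↦ (Z.localTriv i (s y)).2) x :=
    continuousAt_snd.comp (htriv.comp hs)
  exact hcoord.eventually_mem ((isOpen_discrete {(Z.localTriv i (s x)).2}).mem_nhds rfl)

variable [AddGroup G]

/-- The bundle with discrete fibre `G` associated with functions `f i` on `U i` whose differences
are locally constant. Its sections are the functions `F` for which every `F - f i` is locally
constant: the coordinate of such an `F` in the chart `U i` is `F - f i`. -/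
def differenceBundleCore [TopologicalSpace G] [DiscreteTopology G] {U : ι → Set X}
    (hU : ∀ i, IsOpen (U i)) {index : X → ι} (hindex : ∀ x, x ∈ U (index x)) {f : ι → X → G}
    (hf : ∀ i j, ∀ x ∈ U i ∩ U j, ∀ᶠ y in 𝓝 x, f i y - f j y = f i x - f j x) :
    FiberBundleCore ι X G where
  baseSet := U
  isOpen_baseSet := hU
  indexAt := index
  mem_baseSet_at := hindex
  coordChange i j x v := v + (f i x - f j x)
  coordChange_self := by simp
  continuousOn_coordChange i j := by
    rintro ⟨x, v⟩ ⟨hx, -⟩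
    have hconst : ContinuousAt (fun p : X × G ↦ p.2 + (f i x - f j x)) (x, v) :=
      continuousAt_snd.add continuousAt_const
    refine (hconst.congr ?_).continuousWithinAt
    filter_upwards [continuousAt_fst.eventually (hf i j x hx)] with p hp
    rw [hp]
  coordChange_comp := by simp [add_assoc]

theorem exists_glue_of_eventually_sub_eq [SimplyConnectedSpace X] [LocallyPathConnectedSpace X]
    {U : ι → Set X} (hU : ∀ i, IsOpen (U i)) (hcover : ∀ x, ∃ i, x ∈ U i) {f : ι → X → G}
    (hf : ∀ i j, ∀ x ∈ U i ∩ U j, ∀ᶠ y in 𝓝 x, f i y - f j y = f i x - f j x) :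
    ∃ F : X → G, ∀ i, ∀ x ∈ U i, ∀ᶠ y in 𝓝 x, F y - f i y = F x - f i x := by
  choose index hindex using hcover
  let _ : TopologicalSpace G := ⊥
  have : DiscreteTopology G := ⟨rfl⟩
  let Z := differenceBundleCore hU hindex hf
  have hcovering : IsCoveringMap Z.proj := FiberBundle.isCoveringMap
  obtain ⟨x₀⟩ : Nonempty X := inferInstance
  have : Nonempty Z.TotalSpace := ⟨⟨x₀, (0 : G)⟩⟩
  obtain ⟨s, hs⟩ := exists_continuous_section_of_isCoveringMap hcovering
  let v (x : X) : G := (s x).2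
  have hcoord (i : ι) (x : X) : (Z.localTriv i (s x)).2 = v x + f (index x) x - f i x := by
    change v x + (f (index (Z.proj (s x))) (Z.proj (s x)) - f i (Z.proj (s x))) = _
    rw [hs, add_sub_assoc]
  refine ⟨fun x ↦ v x + f (index x) x, fun i x hx ↦ ?_⟩
  have hx' : (s x).proj ∈ Z.baseSet i := by
    rw [show (s x).proj = x from hs x]
    exact hx
  simpa only [hcoord] using
    eventually_localTriv_snd_eq_of_discreteTopology Z s.continuous.continuousAt hx'

end LocallyConstantGluing

section Primitive

variable {𝕜 E F : Type*} [RCLike 𝕜] [NormedAddCommGroup E] [NormedSpace 𝕜 E]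
  [NormedAddCommGroup F] [NormedSpace 𝕜 F] {Ω : Set E} {ω : E → E →L[𝕜] F}

theorem eventually_sub_eq_of_eventually_hasFDerivAt {f₁ f₂ : E → F} {a : E}
    (h₁ : ∀ᶠ x in 𝓝 a, HasFDerivAt f₁ (ω x) x) (h₂ : ∀ᶠ x in 𝓝 a, HasFDerivAt f₂ (ω x) x) :
    ∀ᶠ x in 𝓝 a, f₁ x - f₂ x = f₁ a - f₂ a := by
  let _ : NormedSpace ℝ E := .restrictScalars ℝ 𝕜 E
  obtain ⟨s, hs, hs_open, ha⟩ := eventually_nhds_iff.1 (h₁.and h₂)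
  have hsub : ∀ x ∈ s, HasFDerivAt (fun y ↦ f₁ y - f₂ y) (0 : E →L[𝕜] F) x := fun x hx ↦ by
    simpa only [sub_self] using (hs x hx).1.fun_sub (hs x hx).2
  have hopen := hs_open.isOpen_inter_preimage_of_fderiv_eq_zero
    (fun x hx ↦ (hsub x hx).differentiableAt.differentiableWithinAt)
    (fun x hx ↦ (hsub x hx).fderiv) {f₁ a - f₂ a}
  filter_upwards [hopen.mem_nhds ⟨ha, rfl⟩] with x hx using hx.2

theorem exists_primitive_of_locally_exact (hΩ : IsOpen Ω) [SimplyConnectedSpace Ω]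
    (hω : ∀ a ∈ Ω, ∃ f : E → F, ∀ᶠ x in 𝓝 a, HasFDerivAt f (ω x) x) :
    ∃ f : E → F, ∀ a ∈ Ω, HasFDerivAt f (ω a) a := by
  let _ : NormedSpace ℝ E := .restrictScalars ℝ 𝕜 E
  have : LocallyPathConnectedSpace Ω := hΩ.locallyPathConnectedSpace
  choose! f hf using hω
  let U (i : Ω) : Set Ω := {x | ∀ᶠ y in 𝓝 (x : E), HasFDerivAt (f i) (ω y) y}
  obtain ⟨φ, hφ⟩ : ∃ φ : Ω → F, ∀ i, ∀ x ∈ U i, ∀ᶠ y in 𝓝 x, φ y - f i y = φ x - f i x :=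
    exists_glue_of_eventually_sub_eq (U := U) (f := fun i x ↦ f i x)
      (fun i ↦ isOpen_setOfPred_eventually_nhds.preimage continuous_subtype_val)
      (fun x ↦ ⟨x, hf x x.2⟩)
      fun i j x hx ↦ continuous_subtype_val.continuousAt.eventually
        (eventually_sub_eq_of_eventually_hasFDerivAt hx.1 hx.2)
  refine ⟨Function.extend Subtype.val φ 0, fun a ha ↦ ?_⟩
  refine ((hf a ha).self_of_nhds.add_const (φ ⟨a, ha⟩ - f a a)).congr_of_eventuallyEq ?_
  have hnear := hφ ⟨a, ha⟩ ⟨a, ha⟩ (hf a ha)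
  rw [nhds_subtype_eq_comap, eventually_comap] at hnear
  filter_upwards [hnear, hΩ.mem_nhds ha] with x hx hxΩ
  rw [← hx ⟨x, hxΩ⟩ rfl, add_sub_cancel]
  exact Subtype.val_injective.extend_apply φ 0 ⟨x, hxΩ⟩

theorem exists_primitive_of_fderiv_symmetric [NormedSpace ℝ E] [NormedSpace ℝ F] [CompleteSpace F]
    (hΩ : IsOpen Ω) [SimplyConnectedSpace Ω] (hω : DifferentiableOn ℝ ω Ω)
    (hdω : ∀ a ∈ Ω, ∀ v w, fderiv ℝ ω a v w = fderiv ℝ ω a w v) :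
    ∃ f : E → F, ∀ a ∈ Ω, HasFDerivAt f (ω a) a := by
  refine exists_primitive_of_locally_exact hΩ fun a ha ↦ ?_
  obtain ⟨r, hr, hball⟩ := Metric.isOpen_iff.1 hΩ a ha
  obtain ⟨f, hf⟩ := (convex_ball a r).exists_forall_hasFDerivAt_of_fderiv_symmetric
    Metric.isOpen_ball (hω.mono hball) fun x hx ↦ hdω x (hball hx)
  exact ⟨f, eventually_of_mem (Metric.ball_mem_nhds a hr) hf⟩

theorem contDiffOn_add_one_of_hasFDerivAt {n : ℕ∞} {f : E → F} (hΩ : IsOpen Ω)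
    (hω : ContDiffOn 𝕜 n ω Ω) (hf : ∀ a ∈ Ω, HasFDerivAt f (ω a) a) :
    ContDiffOn 𝕜 (n + 1) f Ω :=
  (contDiffOn_succ_iff_fderiv_of_isOpen hΩ).2
    ⟨fun a ha ↦ (hf a ha).differentiableAt.differentiableWithinAt, by simp,
      hω.congr fun a ha ↦ (hf a ha).fderiv⟩

end Primitive

section PartialDerivatives

variable {Ω : Set (ℝ × ℝ)} {f u : ℝ × ℝ → ℝ} {z : ℝ × ℝ}

theorem pdx_neg : pdx (fun x ↦ -f x) z = -pdx f z := by
  simp [pdx]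

theorem pdy_neg : pdy (fun x ↦ -f x) z = -pdy f z := by
  simp [pdy]

theorem fderiv_apply_eq_pdx_add_pdy (v : ℝ × ℝ) :
    fderiv ℝ f z v = v.1 * pdx f z + v.2 * pdy f z := by
  calc
    fderiv ℝ f z v = fderiv ℝ f z (v.1 • (1, 0) + v.2 • (0, 1)) := by simp
    _ = v.1 * pdx f z + v.2 * pdy f z := by simp only [map_add, map_smul, smul_eq_mul, pdx, pdy]

theorem contDiffOn_pdx {m n : WithTop ℕ∞} (hΩ : IsOpen Ω) (hu : ContDiffOn ℝ n u Ω)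
    (hmn : m + 1 ≤ n) : ContDiffOn ℝ m (pdx u) Ω :=
  (hu.fderiv_of_isOpen hΩ hmn).clm_apply contDiffOn_const

theorem contDiffOn_pdy {m n : WithTop ℕ∞} (hΩ : IsOpen Ω) (hu : ContDiffOn ℝ n u Ω)
    (hmn : m + 1 ≤ n) : ContDiffOn ℝ m (pdy u) Ω :=
  (hu.fderiv_of_isOpen hΩ hmn).clm_apply contDiffOn_const

theorem pdy_pdx_eq_pdx_pdy (hu : ContDiffAt ℝ 2 u z) : pdy (pdx u) z = pdx (pdy u) z := by
  have hdiff : DifferentiableAt ℝ (fderiv ℝ u) z :=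
    (hu.fderiv_right (m := 1) (by norm_num)).differentiableAt one_ne_zero
  have hsecond (v w : ℝ × ℝ) :
      fderiv ℝ (fun x ↦ fderiv ℝ u x w) z v = fderiv ℝ (fderiv ℝ u) z v w := by
    simp [fderiv_clm_apply hdiff (differentiableAt_const w)]
  calc
    pdy (pdx u) z = fderiv ℝ (fderiv ℝ u) z (0, 1) (1, 0) := hsecond _ _
    _ = fderiv ℝ (fderiv ℝ u) z (1, 0) (0, 1) := (hu.isSymmSndFDerivAt (by simp)).eq _ _
    _ = pdx (pdy u) z := (hsecond _ _).symm

theorem exists_contDiffOn_potential {n : ℕ∞} (hn : n ≠ 0) (hΩ : IsOpen Ω) [SimplyConnectedSpace Ω]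
    {P Q : ℝ × ℝ → ℝ} (hP : ContDiffOn ℝ n P Ω) (hQ : ContDiffOn ℝ n Q Ω)
    (hcurl : ∀ z ∈ Ω, pdy P z = pdx Q z) :
    ∃ f : ℝ × ℝ → ℝ, ContDiffOn ℝ (n + 1) f Ω ∧ ∀ z ∈ Ω, pdx f z = P z ∧ pdy f z = Q z := by
  let ω : ℝ × ℝ → ℝ × ℝ →L[ℝ] ℝ := fun z ↦
    P z • ContinuousLinearMap.fst ℝ ℝ ℝ + Q z • ContinuousLinearMap.snd ℝ ℝ ℝ
  have hω : ContDiffOn ℝ n ω Ω := (hP.smul contDiffOn_const).add (hQ.smul contDiffOn_const)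
  have hn' : (n : WithTop ℕ∞) ≠ 0 := by exact_mod_cast hn
  have hdω : ∀ z ∈ Ω, ∀ v w, fderiv ℝ ω z v w = fderiv ℝ ω z w v := by
    intro z hz v w
    have hPz := (hP.differentiableOn hn').differentiableAt (hΩ.mem_nhds hz)
    have hQz := (hQ.differentiableOn hn').differentiableAt (hΩ.mem_nhds hz)
    have hωz : HasFDerivAt ω _ z :=
      (hPz.hasFDerivAt.smul_const (ContinuousLinearMap.fst ℝ ℝ ℝ)).fun_add
        (hQz.hasFDerivAt.smul_const (ContinuousLinearMap.snd ℝ ℝ ℝ))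
    have hωz_apply (v w : ℝ × ℝ) :
        fderiv ℝ ω z v w = fderiv ℝ P z v * w.1 + fderiv ℝ Q z v * w.2 := by
      simp [hωz.fderiv]
    simp only [hωz_apply, fderiv_apply_eq_pdx_add_pdy, hcurl z hz]
    ring
  obtain ⟨f, hf⟩ := exists_primitive_of_fderiv_symmetric hΩ (hω.differentiableOn hn') hdω
  refine ⟨f, contDiffOn_add_one_of_hasFDerivAt hΩ hω hf, fun z hz ↦ ?_⟩
  simp [pdx, pdy, (hf z hz).fderiv, ω]

end PartialDerivatives

section Noether

variable {E : Type*} [NormedAddCommGroup E] [NormedSpace ℝ E] {m n p q G : E → ℝ} {z v w : E}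

/- With `(p, q) = ∇u`, density `G` and momentum `(m, n)`, `hG` says that `(m, n)` is the derivative
of the density in `(p, q)`, `hdiv` is the Euler-Lagrange equation and `hcurl` the symmetry of the
Hessian. The conclusion is one row of the conservation law; exchanging `(m, p, v)` and `(n, q, w)`
gives the other. -/
theorem fderiv_stress_eq (hm : DifferentiableAt ℝ m z) (hn : DifferentiableAt ℝ n z)
    (hp : DifferentiableAt ℝ p z)
    (hG : HasFDerivAt G (m z • fderiv ℝ p z + n z • fderiv ℝ q z) z)
    (hdiv : fderiv ℝ m z v + fderiv ℝ n z w = 0) (hcurl : fderiv ℝ p z w = fderiv ℝ q z v) :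
    fderiv ℝ (fun x ↦ n x * p x) z w = fderiv ℝ (fun x ↦ G x - m x * p x) z v := by
  rw [fderiv_fun_mul hn hp, fderiv_fun_sub hG.differentiableAt (hm.fun_mul hp),
    fderiv_fun_mul hm hp, hG.fderiv]
  simp only [add_apply, sub_apply, smul_apply, smul_eq_mul]
  linear_combination n z * hcurl + p z * hdiv

theorem exists_contDiffOn_stress_potentials {k : ℕ∞} (hk : k ≠ 0) {Ω : Set (ℝ × ℝ)}
    (hΩ : IsOpen Ω) [SimplyConnectedSpace Ω] {m n p q G : ℝ × ℝ → ℝ}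
    (hm : ContDiffOn ℝ k m Ω) (hn : ContDiffOn ℝ k n Ω) (hp : ContDiffOn ℝ k p Ω)
    (hq : ContDiffOn ℝ k q Ω) (hG : ContDiffOn ℝ k G Ω)
    (hdG : ∀ z ∈ Ω, HasFDerivAt G (m z • fderiv ℝ p z + n z • fderiv ℝ q z) z)
    (hdiv : ∀ z ∈ Ω, pdx m z + pdy n z = 0) (hcurl : ∀ z ∈ Ω, pdy p z = pdx q z) :
    ∃ a b c : ℝ × ℝ → ℝ,
      ContDiffOn ℝ (k + 1) a Ω ∧ ContDiffOn ℝ (k + 1) b Ω ∧ ContDiffOn ℝ (k + 1) c Ω ∧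
      ∀ z ∈ Ω,
        pdx a z = n z * p z ∧ pdy a z = G z - m z * p z ∧
        pdx b z = -(G z - n z * q z) ∧ pdy b z = -(m z * q z) ∧
        pdx c z = -n z ∧ pdy c z = m z := by
  have hdiff {f : ℝ × ℝ → ℝ} (hf : ContDiffOn ℝ k f Ω) {z : ℝ × ℝ} (hz : z ∈ Ω) :
      DifferentiableAt ℝ f z :=
    (hf.differentiableOn (by exact_mod_cast hk)).differentiableAt (hΩ.mem_nhds hz)
  have hrow_a : ∀ z ∈ Ω, pdy (fun x ↦ n x * p x) z = pdx (fun x ↦ G x - m x * p x) z :=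
    fun z hz ↦ fderiv_stress_eq (hdiff hm hz) (hdiff hn hz) (hdiff hp hz) (hdG z hz)
      (hdiv z hz) (hcurl z hz)
  have hrow_b : ∀ z ∈ Ω, pdx (fun x ↦ m x * q x) z = pdy (fun x ↦ G x - n x * q x) z :=
    fun z hz ↦ fderiv_stress_eq (hdiff hn hz) (hdiff hm hz) (hdiff hq hz)
      (add_comm (m z • fderiv ℝ p z) _ ▸ hdG z hz) (add_comm (pdx m z) _ ▸ hdiv z hz)
      (hcurl z hz).symm
  obtain ⟨a, ha, hda⟩ := exists_contDiffOn_potential hk hΩ (hn.mul hp) (hG.sub (hm.mul hp)) hrow_a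
  obtain ⟨b, hb, hdb⟩ := exists_contDiffOn_potential hk hΩ (hG.sub (hn.mul hq)).neg
    (hm.mul hq).neg fun z hz ↦ by rw [pdx_neg, pdy_neg, hrow_b z hz]
  obtain ⟨c, hc, hdc⟩ := exists_contDiffOn_potential hk hΩ hn.neg hm
    fun z hz ↦ pdy_neg.trans (eq_neg_of_add_eq_zero_left (hdiv z hz)).symm
  exact ⟨a, b, c, ha, hb, hc, fun z hz ↦
    ⟨(hda z hz).1, (hda z hz).2, (hdb z hz).1, (hdb z hz).2, (hdc z hz).1, (hdc z hz).2⟩⟩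

end Noether

section GradientDensity

variable {g : ℝ → ℝ} {Ω : Set (ℝ × ℝ)} {u : ℝ × ℝ → ℝ} {z : ℝ × ℝ}

theorem Xi_mul_sq (g : ℝ → ℝ) (t : ℝ) : Xi g t * t ^ 2 = t * deriv g t := by
  rcases eq_or_ne t 0 with rfl | ht
  · simp
  · rw [Xi]
    field_simp

theorem contDiffOn_Xi (hg : ContDiffOn ℝ 2 g (Ioi 0)) : ContDiffOn ℝ 1 (Xi g) (Ioi 0) :=
  (hg.deriv_of_isOpen isOpen_Ioi (by norm_num)).div contDiffOn_id fun _ ht ↦ ne_of_gt ht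

theorem gnorm_sq (u : ℝ × ℝ → ℝ) (z : ℝ × ℝ) : gnorm u z ^ 2 = pdx u z ^ 2 + pdy u z ^ 2 :=
  Real.sq_sqrt (by positivity)

theorem theta_gnorm (g : ℝ → ℝ) (u : ℝ × ℝ → ℝ) (z : ℝ × ℝ) :
    theta g (gnorm u z) = g (gnorm u z)
      - Xi g (gnorm u z) * (pdx u z ^ 2 + pdy u z ^ 2) - Xi g (gnorm u z) := by
  rw [theta, ← Xi_mul_sq, gnorm_sq]

theorem sq_add_sq_pos_of_grad_ne_zero (h : (pdx u z, pdy u z) ≠ (0, 0)) :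
    0 < pdx u z ^ 2 + pdy u z ^ 2 := by
  rw [Ne, Prod.mk.injEq, not_and_or] at h
  rcases h with h | h <;> positivity

theorem gnorm_pos (h : (pdx u z, pdy u z) ≠ (0, 0)) : 0 < gnorm u z :=
  Real.sqrt_pos.2 (sq_add_sq_pos_of_grad_ne_zero h)

theorem contDiffOn_gnorm (hΩ : IsOpen Ω) (hu : ContDiffOn ℝ 2 u Ω)
    (hne : ∀ z ∈ Ω, (pdx u z, pdy u z) ≠ (0, 0)) : ContDiffOn ℝ 1 (gnorm u) Ω :=
  (((contDiffOn_pdx hΩ hu one_add_one_eq_two.le).pow 2).add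
    ((contDiffOn_pdy hΩ hu one_add_one_eq_two.le).pow 2)).sqrt
      fun z hz ↦ (sq_add_sq_pos_of_grad_ne_zero (hne z hz)).ne'

theorem hasFDerivAt_comp_gnorm (hg : DifferentiableAt ℝ g (gnorm u z))
    (hx : DifferentiableAt ℝ (pdx u) z) (hy : DifferentiableAt ℝ (pdy u) z)
    (hne : (pdx u z, pdy u z) ≠ (0, 0)) :
    HasFDerivAt (fun x ↦ g (gnorm u x))
      ((Xi g (gnorm u z) * pdx u z) • fderiv ℝ (pdx u) z
        + (Xi g (gnorm u z) * pdy u z) • fderiv ℝ (pdy u) z) z := by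
  have hnorm : HasFDerivAt (gnorm u) _ z := ((hx.hasFDerivAt.pow 2).fun_add
    (hy.hasFDerivAt.pow 2)).sqrt (sq_add_sq_pos_of_grad_ne_zero hne).ne'
  convert! hg.hasDerivAt.comp_hasFDerivAt z hnorm using 1
  ext <;> simp [Xi, gnorm] <;> ring

end GradientDensity

theorem exists_potential_of_mu_surface_general
    (g : ℝ → ℝ) (hg : ContDiffOn ℝ 2 g (Ioi 0))
    (Ω : Set (ℝ × ℝ)) (hΩ : IsOpen Ω) (hsc : SimplyConnectedSpace Ω)
    (u : ℝ × ℝ → ℝ) (hu : ContDiffOn ℝ 2 u Ω)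
    (hne : ∀ p ∈ Ω, (pdx u p, pdy u p) ≠ (0, 0))
    (hsol : ∀ p ∈ Ω,
      pdx (fun q => Xi g (gnorm u q) * pdx u q) p
        + pdy (fun q => Xi g (gnorm u q) * pdy u q) p = 0) :
    ∃ a b c : ℝ × ℝ → ℝ,
      ContDiffOn ℝ 2 a Ω ∧ ContDiffOn ℝ 2 b Ω ∧ ContDiffOn ℝ 2 c Ω ∧
      ∀ p ∈ Ω,
        pdx a p = Xi g (gnorm u p) * pdx u p * pdy u p ∧
        pdy a p = Xi g (gnorm u p) * (1 + (pdy u p) ^ 2) + theta g (gnorm u p) ∧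
        pdx b p = -(Xi g (gnorm u p) * (1 + (pdx u p) ^ 2) + theta g (gnorm u p)) ∧
        pdy b p = -(Xi g (gnorm u p) * pdx u p * pdy u p) ∧
        pdx c p = -(Xi g (gnorm u p) * pdy u p) ∧
        pdy c p = Xi g (gnorm u p) * pdx u p := by
  have hP : ContDiffOn ℝ 1 (pdx u) Ω := contDiffOn_pdx hΩ hu one_add_one_eq_two.le
  have hQ : ContDiffOn ℝ 1 (pdy u) Ω := contDiffOn_pdy hΩ hu one_add_one_eq_two.le
  have hN : ContDiffOn ℝ 1 (gnorm u) Ω := contDiffOn_gnorm hΩ hu hne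
  have hN_pos : MapsTo (gnorm u) Ω (Ioi 0) := fun z hz ↦ gnorm_pos (hne z hz)
  have hG : ContDiffOn ℝ 1 (fun z ↦ g (gnorm u z)) Ω := (hg.of_le one_le_two).comp hN hN_pos
  have hΞ : ContDiffOn ℝ 1 (fun z ↦ Xi g (gnorm u z)) Ω := (contDiffOn_Xi hg).comp hN hN_pos
  have hdG : ∀ z ∈ Ω, HasFDerivAt (fun z ↦ g (gnorm u z))
      ((Xi g (gnorm u z) * pdx u z) • fderiv ℝ (pdx u) z
        + (Xi g (gnorm u z) * pdy u z) • fderiv ℝ (pdy u) z) z := fun z hz ↦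
    hasFDerivAt_comp_gnorm
      ((hg.differentiableOn two_ne_zero).differentiableAt (Ioi_mem_nhds (hN_pos hz)))
      ((hP.differentiableOn one_ne_zero).differentiableAt (hΩ.mem_nhds hz))
      ((hQ.differentiableOn one_ne_zero).differentiableAt (hΩ.mem_nhds hz)) (hne z hz)
  obtain ⟨a, b, c, ha, hb, hc, hd⟩ := exists_contDiffOn_stress_potentials one_ne_zero hΩ
    (hΞ.mul hP) (hΞ.mul hQ) hP hQ hG hdG hsol
    fun z hz ↦ pdy_pdx_eq_pdx_pdy (hu.contDiffAt (hΩ.mem_nhds hz))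
  rw [WithTop.coe_one, one_add_one_eq_two] at ha hb hc
  refine ⟨a, b, c, ha, hb, hc, fun z hz ↦ ?_⟩
  obtain ⟨hax, hay, hbx, hby, hcx, hcy⟩ := hd z hz
  rw [theta_gnorm]
  refine ⟨?_, ?_, ?_, ?_, hcx, hcy⟩ <;> linarith

/-- for a `C²` solution of the `μ`-surface equation on a simply connected
domain with nonvanishing gradient, the form `N̂ ∧ dX` is a total differential `-dX*`,
`X* = (a,b,c)`. -/
theorem exists_potential_of_mu_surface
    (g : ℝ → ℝ) (hA : AssumptionA g) (hM : CondM g)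
    (Ω : Set (ℝ × ℝ)) (hΩ : IsOpen Ω) (hsc : SimplyConnectedSpace Ω)
    (u : ℝ × ℝ → ℝ) (hu : ContDiffOn ℝ 2 u Ω)
    (hne : ∀ p ∈ Ω, (pdx u p, pdy u p) ≠ (0, 0))
    (hsol : ∀ p ∈ Ω,
      pdx (fun q => Xi g (gnorm u q) * pdx u q) p
        + pdy (fun q => Xi g (gnorm u q) * pdy u q) p = 0) :
    ∃ a b c : ℝ × ℝ → ℝ,
      ContDiffOn ℝ 2 a Ω ∧ ContDiffOn ℝ 2 b Ω ∧ ContDiffOn ℝ 2 c Ω ∧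
      ∀ p ∈ Ω,
        pdx a p = Xi g (gnorm u p) * pdx u p * pdy u p ∧
        pdy a p = Xi g (gnorm u p) * (1 + (pdy u p) ^ 2) + theta g (gnorm u p) ∧
        pdx b p = -(Xi g (gnorm u p) * (1 + (pdx u p) ^ 2) + theta g (gnorm u p)) ∧
        pdy b p = -(Xi g (gnorm u p) * pdx u p * pdy u p) ∧
        pdx c p = -(Xi g (gnorm u p) * pdy u p) ∧
        pdy c p = Xi g (gnorm u p) * pdx u p := by
  exact exists_potential_of_mu_surface_general g (hA.1.mono Ioi_subset_Ici_self) Ω hΩ hsc u hu hne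
    hsol
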